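/- Let S be a set of 2k points in the plane in general position. Suppose S has a non-crossing perfect matching M containing two pairs {A,B} and {C,D} such that A lies on the boundary of the convex hull of S and the segment AB pierces the segment CD (i.e., the closed segments AB and CD are disjoint, but the line through A and B meets the closed segment CD). Then the number of non-crossing perfect matchings of S is strictly greater than C_k: pm(S) > C_k. -/

import Mathlib

open scoped Classical

/-- Points in the plane. -/
abbrev Pt : Type := ℝ × ℝ

/-- A finite planar point set is in *general position* if no three of its
points are collinear. -/
def GeneralPosition (S : Finset Pt) : Prop :=
  ∀ p ∈ S, ∀ q ∈ S, ∀ r ∈ S, p ≠ q → p ≠ r → q ≠ r →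
    ¬ Collinear ℝ ({p, q, r} : Set Pt)

/-- The closed straight-line segment spanned by an unordered pair of points. -/
noncomputable def seg : Sym2 Pt → Set Pt :=
  Sym2.lift ⟨fun a b => segment ℝ a b, fun a b => segment_symm ℝ a b⟩

/-- `M` is a non-crossing perfect matching of `S`: a partition of `S` into
unordered pairs (of distinct points) whose closed segments are pairwise disjoint. -/
def IsNCMatching (S : Finset Pt) (M : Finset (Sym2 Pt)) : Prop :=
  (∀ e ∈ M, ¬ e.IsDiag) ∧
  (∀ e ∈ M, ∀ p, p ∈ e → p ∈ S) ∧
  (∀ p ∈ S, ∃! e, e ∈ M ∧ p ∈ e) ∧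
  (∀ e ∈ M, ∀ f ∈ M, e ≠ f → Disjoint (seg e) (seg f))

/-- The number of non-crossing perfect matchings of `S`. -/
noncomputable def pm (S : Finset Pt) : ℕ :=
  Set.ncard {M : Finset (Sym2 Pt) | IsNCMatching S M}

/-- `S` is in convex position: no point of `S` lies in the convex hull of the
other points. -/
def ConvexPosition (S : Finset Pt) : Prop :=
  ∀ p ∈ S, p ∉ convexHull ℝ (↑(S.erase p) : Set Pt)

/-- The signed side of `X` with respect to the directed line from `Q` to `P`.
The two open half-planes bounded by the line through `Q` and `P` are
`{X | 0 < sideOf Q P X}` and `{X | sideOf Q P X < 0}`. -/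
def sideOf (Q P X : Pt) : ℝ :=
  (P.1 - Q.1) * (X.2 - Q.2) - (P.2 - Q.2) * (X.1 - Q.1)

/-- Segment `AB` pierces segment `CD`: the closed segments are disjoint, but the
affine line through `A` and `B` meets the closed segment `CD`. -/
def Pierces (A B C D : Pt) : Prop :=
  Disjoint (segment ℝ A B) (segment ℝ C D) ∧
  ((affineSpan ℝ ({A, B} : Set Pt) : Set Pt) ∩ segment ℝ C D).Nonempty

/-- The matching `M` of `S` has the *piercing property*: it contains pairs
`{A,B}` and `{C,D}` with `A` on the boundary of the convex hull of `S`
and `AB` piercing `CD`. -/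
def HasPiercing (S : Finset Pt) (M : Finset (Sym2 Pt)) : Prop :=
  ∃ A B C D : Pt, s(A, B) ∈ M ∧ s(C, D) ∈ M ∧
    A ∈ frontier (convexHull ℝ (S : Set Pt)) ∧ Pierces A B C D

/-- The exceptional order type with interior point `Q`: `Q` is the unique point
of `S` interior to the convex hull of `S`, and for every other point `P` of `S`
each open half-plane bounded by the line through `Q` and `P` contains exactly
two points of `S`. -/
def ExceptionalAt (S : Finset Pt) (Q : Pt) : Prop :=
  (↑S ∩ interior (convexHull ℝ (S : Set Pt))) = {Q} ∧
  ∀ P ∈ S, P ≠ Q →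
    (S.filter (fun X => 0 < sideOf Q P X)).card = 2 ∧
    (S.filter (fun X => sideOf Q P X < 0)).card = 2

/-- The exceptional order type of Figure 1. -/
def Exceptional (S : Finset Pt) : Prop :=
  ∃ Q ∈ S, ExceptionalAt S Q

/-!
Fix a point `A` of `S` through which a line passes that leaves all of `S` on one side. The rays
from `A` to the other points of `S` are then linearly ordered by angle, so if `S` has `2k` points,
for each `i + j = k - 1` some point `X` has exactly `2i` points to the left of the line `AX` and
`2j` to its right. Adding the edge `AX` to non-crossing matchings of the two sides gives a
non-crossing matching of `S` in which the edge at `A` pierces no other edge, and distinct choices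
give distinct matchings. By induction there are at least `∑ C_i C_j = C_k` matchings of this kind,
and a matching in which the edge at `A` pierces another edge is not among them.
-/

/-! ### Orientation of triples of points -/

section Orientation

variable (Q P X Y V : Pt)

theorem sideOf_apply_left : sideOf Q P Q = 0 := by
  simp [sideOf]

theorem sideOf_apply_right : sideOf Q P P = 0 := by
  simp [sideOf, mul_comm]

theorem sideOf_swap_left : sideOf P Q X = -sideOf Q P X := by
  unfold sideOf; ring

theorem sideOf_swap_right : sideOf Q X P = -sideOf Q P X := by
  unfold sideOf; ring

/-- Cramer's rule for `V - Q` in terms of `X - Q` and `Y - Q`. -/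
theorem sideOf_smul_sub :
    sideOf Q X Y • (V - Q) = sideOf Q V Y • (X - Q) + sideOf Q X V • (Y - Q) := by
  ext <;> simp only [sideOf, Prod.smul_fst, Prod.smul_snd, Prod.fst_add, Prod.snd_add,
    Prod.fst_sub, Prod.snd_sub, smul_eq_mul] <;> ring

/-- `sideOf Q P` as an affine map, giving access to the library on preimages of convex sets and on
lines under affine maps. -/
def sideOfAffineMap : Pt →ᵃ[ℝ] ℝ :=
  ((P.1 - Q.1) • LinearMap.snd ℝ ℝ ℝ - (P.2 - Q.2) • LinearMap.fst ℝ ℝ ℝ).toAffineMap -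
    AffineMap.const ℝ Pt ((P.1 - Q.1) * Q.2 - (P.2 - Q.2) * Q.1)

theorem coe_sideOfAffineMap : ⇑(sideOfAffineMap Q P) = sideOf Q P := by
  ext X
  simp only [sideOfAffineMap, sideOf, AffineMap.coe_sub, Pi.sub_apply, LinearMap.coe_toAffineMap,
    LinearMap.sub_apply, LinearMap.smul_apply, LinearMap.snd_apply, LinearMap.fst_apply,
    AffineMap.const_apply, smul_eq_mul]
  ring

theorem convex_setOf_sideOf_pos : Convex ℝ {X | 0 < sideOf Q P X} := by
  simpa only [coe_sideOfAffineMap] using! (convex_Ioi 0).affine_preimage (sideOfAffineMap Q P)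

variable {Q P X}

theorem sideOf_eq_zero_of_mem_affineSpan (hX : X ∈ affineSpan ℝ ({Q, P} : Set Pt)) :
    sideOf Q P X = 0 := by
  obtain ⟨t, rfl⟩ := mem_affineSpan_pair_iff_exists_lineMap_eq.mp hX
  rw [← coe_sideOfAffineMap, AffineMap.apply_lineMap, coe_sideOfAffineMap, sideOf_apply_left,
    sideOf_apply_right, AffineMap.lineMap_same_apply]

theorem collinear_of_sideOf_eq_zero {R : Pt} (h : sideOf P Q R = 0) :
    Collinear ℝ ({P, Q, R} : Set Pt) := by
  obtain rfl | hPQ := eq_or_ne P Q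
  · simpa using collinear_pair ℝ P R
  -- `V - P` is `Q - P` rotated by a right angle, so `P, Q, V` are not collinear.
  let V : Pt := (P.1 - (Q.2 - P.2), P.2 + (Q.1 - P.1))
  have hV : sideOf P Q V ≠ 0 := by
    have hsq : sideOf P Q V = (Q.1 - P.1) ^ 2 + (Q.2 - P.2) ^ 2 := by simp only [sideOf, V]; ring
    contrapose! hPQ
    ext <;> nlinarith
  have hR : R - P = (-(sideOf P Q V)⁻¹ * sideOf P V R) • (Q - P) := by
    have := sideOf_smul_sub P Q R V
    rw [h, zero_smul, eq_comm, add_comm, add_eq_zero_iff_eq_neg] at this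
    rw [← inv_smul_smul₀ hV (R - P), this, smul_neg, smul_smul, neg_mul, neg_smul]
  refine (collinear_iff_of_mem (p₀ := P) (by simp)).mpr ⟨Q - P, ?_⟩
  rintro Z (rfl | rfl | rfl)
  · exact ⟨0, by simp⟩
  · exact ⟨1, by simp⟩
  · exact ⟨_, by rw [← hR]; simp⟩

end Orientation

theorem GeneralPosition.mono {S T : Finset Pt} (hS : GeneralPosition S) (hTS : T ⊆ S) :
    GeneralPosition T :=
  fun P hP Q hQ R hR ↦ hS P (hTS hP) Q (hTS hQ) R (hTS hR)

theorem GeneralPosition.sideOf_ne_zero {S : Finset Pt} (hS : GeneralPosition S) {P Q R : Pt}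
    (hP : P ∈ S) (hQ : Q ∈ S) (hR : R ∈ S) (hPQ : P ≠ Q) (hPR : P ≠ R) (hQR : Q ≠ R) :
    sideOf P Q R ≠ 0 :=
  fun h ↦ hS P hP Q hQ R hR hPQ hPR hQR (collinear_of_sideOf_eq_zero h)

/-! ### Support points -/

/-- `a` is a support point of `s`: some hyperplane through `a ∈ s`, given by a nonzero linear
functional, has all of `s` on one side. The hyperplane may contain all of `s`. -/
def IsSupportPoint {E : Type*} [AddCommGroup E] [Module ℝ E] (s : Set E) (a : E) : Prop :=
  a ∈ s ∧ ∃ f : Module.Dual ℝ E, f ≠ 0 ∧ ∀ x ∈ s, f x ≤ f a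

theorem exists_isSupportPoint {E : Type*} [AddCommGroup E] [Module ℝ E] [Nontrivial E]
    {s : Finset E} (hs : s.Nonempty) : ∃ a, IsSupportPoint (s : Set E) a := by
  obtain ⟨f, hf⟩ := exists_ne (0 : Module.Dual ℝ E)
  obtain ⟨a, ha, hmax⟩ := s.exists_max_image f hs
  exact ⟨a, ha, f, hf, hmax⟩

theorem isSupportPoint_of_mem_frontier_convexHull {E : Type*} [NormedAddCommGroup E]
    [NormedSpace ℝ E] [FiniteDimensional ℝ E] {s : Set E} {a : E} (ha : a ∈ s)
    (hfrontier : a ∈ frontier (convexHull ℝ s)) : IsSupportPoint s a := by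
  refine ⟨ha, ?_⟩
  by_cases hspan : affineSpan ℝ s = ⊤
  · obtain ⟨f, hf, hmax⟩ := geometric_hahn_banach_of_nonempty_interior_point
      (convex_convexHull ℝ s) hfrontier.2
      (interior_convexHull_nonempty_iff_affineSpan_eq_top.mpr hspan)
    exact ⟨f, mod_cast hf, fun x hx ↦ hmax x (subset_convexHull ℝ s hx)⟩
  · rw [AffineSubspace.affineSpan_eq_top_iff_vectorSpan_eq_top_of_nonempty ℝ E E ⟨a, ha⟩] at hspan
    obtain ⟨f, hf, hker⟩ := (vectorSpan ℝ s).exists_le_ker_of_lt_top (lt_top_iff_ne_top.mpr hspan)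
    refine ⟨f, hf, fun x hx ↦ (sub_eq_zero.mp ?_).le⟩
    rw [← map_sub]
    exact hker (vsub_mem_vectorSpan ℝ hx ha)

theorem IsSupportPoint.sideOf_nonneg_of_pos_of_pos {s : Set Pt} {A X Y Z : Pt}
    (hA : IsSupportPoint s A) (hX : X ∈ s) (hY : Y ∈ s) (hZ : Z ∈ s)
    (hXY : 0 < sideOf A X Y) (hYZ : 0 < sideOf A Y Z) : 0 ≤ sideOf A X Z := by
  obtain ⟨-, f, hf, hmax⟩ := hA
  have nonpos {V : Pt} (hV : V ∈ s) : f (V - A) ≤ 0 := by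
    simpa using hmax V hV
  have cramer (X Y V : Pt) : sideOf A X Y * f (V - A) =
      sideOf A V Y * f (X - A) + sideOf A X V * f (Y - A) := by
    simpa using congrArg f (sideOf_smul_sub A X Y V)
  by_contra! hXZ
  -- Otherwise the left side of Cramer's rule is nonnegative and both terms on the right are
  -- nonpositive, so `f` vanishes on `X - A` and `Y - A`, which span the plane.
  have hY_term := mul_nonneg_of_nonpos_of_nonpos hXZ.le (nonpos hY)
  have hX_term := mul_nonpos_of_nonneg_of_nonpos hYZ.le (nonpos hX)
  have hZ_term := mul_nonpos_of_nonneg_of_nonpos hXY.le (nonpos hZ)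
  have hXYZ := cramer X Z Y
  have hfX : f (X - A) = 0 := by
    have : sideOf A Y Z * f (X - A) = 0 := by linarith
    exact (mul_eq_zero.mp this).resolve_left hYZ.ne'
  have hfY : f (Y - A) = 0 := by
    have : sideOf A X Z * f (Y - A) = 0 := by linarith
    exact (mul_eq_zero.mp this).resolve_left hXZ.ne
  refine hf (LinearMap.ext fun v ↦ ?_)
  have hfv := cramer X Y (A + v)
  rw [hfX, hfY, mul_zero, mul_zero, add_zero, add_sub_cancel_left] at hfv
  exact (mul_eq_zero.mp hfv).resolve_left hXY.ne'

/-! ### Splitting a point set along a line -/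

/-- The points of `S` strictly to the left of the line directed from `Q` to `P`. Those strictly to
its right are `leftOf S P Q`. -/
noncomputable def leftOf (S : Finset Pt) (Q P : Pt) : Finset Pt :=
  S.filter fun X ↦ 0 < sideOf Q P X

section LeftOf

variable {S : Finset Pt} {A X Y : Pt}

theorem mem_leftOf : Y ∈ leftOf S A X ↔ Y ∈ S ∧ 0 < sideOf A X Y :=
  Finset.mem_filter

theorem mem_leftOf_swap : Y ∈ leftOf S X A ↔ Y ∈ S ∧ sideOf A X Y < 0 := by
  rw [mem_leftOf, sideOf_swap_left, neg_pos]

theorem left_notMem_leftOf : A ∉ leftOf S A X := by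
  simp [mem_leftOf, sideOf_apply_left]

theorem right_notMem_leftOf : X ∉ leftOf S A X := by
  simp [mem_leftOf, sideOf_apply_right]

theorem leftOf_ssubset (hA : A ∈ S) : leftOf S A X ⊂ S :=
  Finset.filter_ssubset.mpr ⟨A, hA, by simp [sideOf_apply_left]⟩

theorem disjoint_leftOf_swap : Disjoint (leftOf S A X) (leftOf S X A) :=
  Finset.disjoint_left.mpr fun _ hL hR ↦
    (mem_leftOf.mp hL).2.not_gt (mem_leftOf_swap.mp hR).2

theorem pair_union_leftOf_union_leftOf (hS : GeneralPosition S) (hA : A ∈ S) (hX : X ∈ S)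
    (hAX : A ≠ X) : {A, X} ∪ (leftOf S A X ∪ leftOf S X A) = S := by
  ext Y
  simp only [Finset.mem_union, Finset.mem_insert, Finset.mem_singleton, mem_leftOf,
    mem_leftOf_swap (A := A)]
  constructor
  · rintro ((rfl | rfl) | hY | hY)
    exacts [hA, hX, hY.1, hY.1]
  · intro hY
    by_cases hYA : Y = A
    · exact .inl (.inl hYA)
    by_cases hYX : Y = X
    · exact .inl (.inr hYX)
    obtain hlt | hgt := lt_or_gt_of_ne
      (hS.sideOf_ne_zero hA hX hY hAX (Ne.symm hYA) (Ne.symm hYX))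
    · exact .inr (.inr ⟨hY, hlt⟩)
    · exact .inr (.inl ⟨hY, hgt⟩)

theorem card_leftOf_add_card_leftOf (hS : GeneralPosition S) (hA : A ∈ S) (hX : X ∈ S)
    (hAX : A ≠ X) : (leftOf S A X).card + (leftOf S X A).card + 2 = S.card := by
  have hdisj : Disjoint {A, X} (leftOf S A X ∪ leftOf S X A) := by
    simp [left_notMem_leftOf, right_notMem_leftOf]
  conv_rhs => rw [← pair_union_leftOf_union_leftOf hS hA hX hAX]
  rw [Finset.card_union_of_disjoint hdisj, Finset.card_union_of_disjoint disjoint_leftOf_swap,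
    Finset.card_pair hAX, add_comm]

theorem card_leftOf_lt_card_leftOf (hS : GeneralPosition S) (hA : IsSupportPoint (S : Set Pt) A)
    (hX : X ∈ S) (hY : Y ∈ S) (hXY : 0 < sideOf A X Y) :
    (leftOf S A Y).card < (leftOf S A X).card := by
  refine Finset.card_lt_card ((Finset.ssubset_iff_of_subset fun Z hZ ↦ ?_).mpr
    ⟨Y, mem_leftOf.mpr ⟨hY, hXY⟩, right_notMem_leftOf⟩)
  obtain ⟨hZS, hYZ⟩ := mem_leftOf.mp hZ
  have hAX : A ≠ X := by rintro rfl; simp [sideOf] at hXY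
  have hAZ : A ≠ Z := by rintro rfl; simp [sideOf_apply_left] at hYZ
  have hXZ : X ≠ Z := by
    rintro rfl
    rw [sideOf_swap_right] at hYZ
    linarith
  exact mem_leftOf.mpr ⟨hZS, (hA.sideOf_nonneg_of_pos_of_pos hX hY hZS hXY hYZ).lt_of_ne'
    (hS.sideOf_ne_zero hA.1 hX hZS hAX hAZ hXZ)⟩

theorem injOn_card_leftOf (hS : GeneralPosition S) (hA : IsSupportPoint (S : Set Pt) A) :
    Set.InjOn (fun X ↦ (leftOf S A X).card) (S.erase A : Finset Pt) := by
  intro X hX Y hY hcard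
  obtain ⟨hXA, hXS⟩ := Finset.mem_erase.mp hX
  obtain ⟨hYA, hYS⟩ := Finset.mem_erase.mp hY
  by_contra hXY
  obtain hlt | hgt := lt_or_gt_of_ne (hS.sideOf_ne_zero hA.1 hXS hYS hXA.symm hYA.symm hXY)
  · rw [← neg_pos, ← sideOf_swap_right] at hlt
    exact (card_leftOf_lt_card_leftOf hS hA hYS hXS hlt).ne hcard
  · exact (card_leftOf_lt_card_leftOf hS hA hXS hYS hgt).ne' hcard

theorem exists_card_leftOf_eq (hS : GeneralPosition S) (hA : IsSupportPoint (S : Set Pt) A)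
    {i j : ℕ} (hij : i + j + 2 = S.card) :
    ∃ X ∈ S.erase A, (leftOf S A X).card = i ∧ (leftOf S X A).card = j := by
  have hsum {X : Pt} (hX : X ∈ S.erase A) :
      (leftOf S A X).card + (leftOf S X A).card + 2 = S.card :=
    card_leftOf_add_card_leftOf hS hA.1 (Finset.mem_of_mem_erase hX)
      (Finset.ne_of_mem_erase hX).symm
  have hsurj : Set.SurjOn (fun X ↦ (leftOf S A X).card) (S.erase A : Finset Pt)
      (Finset.range (S.card - 1) : Finset ℕ) := by
    refine Finset.surjOn_of_injOn_of_card_le _ (fun X hX ↦ ?_) (injOn_card_leftOf hS hA) ?_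
    · have := hsum hX
      simp only [Finset.coe_range, Set.mem_Iio]
      lia
    · rw [Finset.card_range, Finset.card_erase_of_mem hA.1]
  obtain ⟨X, hX, hXi⟩ := hsurj (Finset.mem_coe.mpr (Finset.mem_range.mpr (by lia : i < _)))
  have := hsum hX
  exact ⟨X, hX, hXi, by lia⟩

end LeftOf

/-! ### Non-crossing matchings -/

theorem seg_subset_of_convex {K : Set Pt} (hK : Convex ℝ K) {e : Sym2 Pt}
    (he : ∀ P ∈ e, P ∈ K) : seg e ⊆ K := by
  induction e with
  | _ P Q => exact hK.segment_subset (he P (Sym2.mem_mk_left P Q)) (he Q (Sym2.mem_mk_right P Q))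

theorem mem_seg_of_mem {e : Sym2 Pt} {P : Pt} (hP : P ∈ e) : P ∈ seg e := by
  induction e with
  | _ Q R =>
    obtain rfl | rfl := Sym2.mem_iff.mp hP
    exacts [left_mem_segment ℝ P R, right_mem_segment ℝ Q P]

theorem sideOf_eq_zero_of_mem_seg {Q P X : Pt} (hX : X ∈ seg s(Q, P)) : sideOf Q P X = 0 :=
  sideOf_eq_zero_of_mem_affineSpan <|
    convexHull_subset_affineSpan (𝕜 := ℝ) _ (by rwa [convexHull_pair])

theorem isNCMatching_empty : IsNCMatching ∅ ∅ := by
  simp [IsNCMatching]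

theorem isNCMatching_pair {P Q : Pt} (hPQ : P ≠ Q) : IsNCMatching {P, Q} {s(P, Q)} := by
  refine ⟨by simpa using hPQ, by simp, fun R hR ↦ ⟨s(P, Q), by simpa using hR, by simp⟩, ?_⟩
  simp only [Finset.mem_singleton]
  rintro e rfl f rfl hef
  exact absurd rfl hef

theorem IsNCMatching.union {S T : Finset Pt} {M N : Finset (Sym2 Pt)} (hM : IsNCMatching S M)
    (hN : IsNCMatching T N) (hMN : ∀ e ∈ M, ∀ f ∈ N, Disjoint (seg e) (seg f)) :
    IsNCMatching (S ∪ T) (M ∪ N) := by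
  obtain ⟨hM_diag, hM_mem, hM_cover, hM_disj⟩ := hM
  obtain ⟨hN_diag, hN_mem, hN_cover, hN_disj⟩ := hN
  have not_both {e f : Sym2 Pt} (he : e ∈ M) (hf : f ∈ N) {P : Pt} (hPe : P ∈ e) (hPf : P ∈ f) :
      False :=
    Set.disjoint_left.mp (hMN e he f hf) (mem_seg_of_mem hPe) (mem_seg_of_mem hPf)
  simp only [IsNCMatching, Finset.mem_union]
  refine ⟨?_, ?_, ?_, ?_⟩
  · rintro e (he | he)
    exacts [hM_diag e he, hN_diag e he]
  · rintro e (he | he) P hP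
    exacts [.inl (hM_mem e he P hP), .inr (hN_mem e he P hP)]
  · rintro P (hP | hP)
    · obtain ⟨e, ⟨he, hPe⟩, huniq⟩ := hM_cover P hP
      refine ⟨e, ⟨.inl he, hPe⟩, ?_⟩
      rintro f ⟨hf | hf, hPf⟩
      exacts [huniq f ⟨hf, hPf⟩, (not_both he hf hPe hPf).elim]
    · obtain ⟨e, ⟨he, hPe⟩, huniq⟩ := hN_cover P hP
      refine ⟨e, ⟨.inr he, hPe⟩, ?_⟩
      rintro f ⟨hf | hf, hPf⟩
      exacts [(not_both hf he hPf hPe).elim, huniq f ⟨hf, hPf⟩]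
  · rintro e (he | he) f (hf | hf) hef
    exacts [hM_disj e he f hf hef, hMN e he f hf, (hMN f hf e he).symm, hN_disj e he f hf hef]

/-- The non-crossing perfect matchings of `S` as a finset, so that `pm S` is its cardinality. -/
noncomputable def ncMatchings (S : Finset Pt) : Finset (Finset (Sym2 Pt)) :=
  S.sym2.powerset.filter (IsNCMatching S)

theorem mem_ncMatchings {S : Finset Pt} {M : Finset (Sym2 Pt)} :
    M ∈ ncMatchings S ↔ IsNCMatching S M := by
  simp only [ncMatchings, Finset.mem_filter, Finset.mem_powerset, and_iff_right_iff_imp]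
  exact fun hM e he ↦ Finset.mem_sym2_iff.mpr (hM.2.1 e he)

theorem pm_eq_card_ncMatchings (S : Finset Pt) : pm S = (ncMatchings S).card := by
  rw [pm, ← Set.ncard_coe_finset]
  congr 1
  ext M
  simp only [Set.mem_ofPred_eq, Finset.mem_coe, mem_ncMatchings]

/-- Some edge of `M` at `A` pierces an edge of `M`. -/
def PiercesAt (A : Pt) (M : Finset (Sym2 Pt)) : Prop :=
  ∃ B C D : Pt, s(A, B) ∈ M ∧ s(C, D) ∈ M ∧ Pierces A B C D

/-- The non-crossing perfect matchings of `S` whose edge at `A` pierces no edge; these are the ones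
that split along the line through the edge at `A`. -/
noncomputable def nonPiercingMatchings (S : Finset Pt) (A : Pt) : Finset (Finset (Sym2 Pt)) :=
  (ncMatchings S).filter fun M ↦ ¬ PiercesAt A M

/-! ### Joining matchings of the two sides of a line -/

/-- The edge `AX` together with the edges of `M` and `N`, which are meant to be matchings of the
points to the left and to the right of the line `AX`. -/
noncomputable def joinAcross (A X : Pt) (M N : Finset (Sym2 Pt)) : Finset (Sym2 Pt) :=
  insert s(A, X) (M ∪ N)

theorem joinAcross_swap (A X : Pt) (M N : Finset (Sym2 Pt)) :
    joinAcross X A N M = joinAcross A X M N := by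
  rw [joinAcross, joinAcross, Sym2.eq_swap, Finset.union_comm]

section JoinAcross

variable {S : Finset Pt} {A X : Pt} {M N : Finset (Sym2 Pt)}

theorem IsNCMatching.sideOf_pos_of_mem_edge (hM : IsNCMatching (leftOf S A X) M) {e : Sym2 Pt}
    (he : e ∈ M) {P : Pt} (hP : P ∈ e) : 0 < sideOf A X P :=
  (mem_leftOf.mp (hM.2.1 e he P hP)).2

theorem IsNCMatching.sideOf_pos_of_mem_seg (hM : IsNCMatching (leftOf S A X) M) {e : Sym2 Pt}
    (he : e ∈ M) {Z : Pt} (hZ : Z ∈ seg e) : 0 < sideOf A X Z :=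
  seg_subset_of_convex (convex_setOf_sideOf_pos A X) (fun _ ↦ hM.sideOf_pos_of_mem_edge he) hZ

theorem IsNCMatching.sideOf_neg_of_mem_seg (hN : IsNCMatching (leftOf S X A) N) {e : Sym2 Pt}
    (he : e ∈ N) {Z : Pt} (hZ : Z ∈ seg e) : sideOf A X Z < 0 := by
  rw [← neg_pos, ← sideOf_swap_left]
  exact hN.sideOf_pos_of_mem_seg he hZ

theorem sideOf_ne_zero_of_mem_seg_of_mem_union (hM : IsNCMatching (leftOf S A X) M)
    (hN : IsNCMatching (leftOf S X A) N) {e : Sym2 Pt} (he : e ∈ M ∪ N) {Z : Pt}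
    (hZ : Z ∈ seg e) : sideOf A X Z ≠ 0 := by
  obtain he | he := Finset.mem_union.mp he
  exacts [(hM.sideOf_pos_of_mem_seg he hZ).ne', (hN.sideOf_neg_of_mem_seg he hZ).ne]

theorem isNCMatching_joinAcross (hS : GeneralPosition S) (hA : A ∈ S) (hX : X ∈ S) (hAX : A ≠ X)
    (hM : IsNCMatching (leftOf S A X) M) (hN : IsNCMatching (leftOf S X A) N) :
    IsNCMatching S (joinAcross A X M N) := by
  have hsides : IsNCMatching (leftOf S A X ∪ leftOf S X A) (M ∪ N) :=
    hM.union hN fun e he f hf ↦ Set.disjoint_left.mpr fun Z hZe hZf ↦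
      (hM.sideOf_pos_of_mem_seg he hZe).not_gt (hN.sideOf_neg_of_mem_seg hf hZf)
  rw [← pair_union_leftOf_union_leftOf hS hA hX hAX, joinAcross, Finset.insert_eq]
  refine (isNCMatching_pair hAX).union hsides fun e he f hf ↦ ?_
  obtain rfl := Finset.mem_singleton.mp he
  exact Set.disjoint_left.mpr fun Z hZ hZf ↦
    sideOf_ne_zero_of_mem_seg_of_mem_union hM hN hf hZf (sideOf_eq_zero_of_mem_seg hZ)

theorem eq_of_mk_mem_joinAcross (hM : IsNCMatching (leftOf S A X) M)
    (hN : IsNCMatching (leftOf S X A) N) {Y : Pt} (hY : s(A, Y) ∈ joinAcross A X M N) :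
    Y = X := by
  obtain hY | hY := Finset.mem_insert.mp hY
  · exact Sym2.congr_right.mp hY
  · exact absurd (sideOf_apply_left A X) <| sideOf_ne_zero_of_mem_seg_of_mem_union hM hN hY
      (mem_seg_of_mem (Sym2.mem_mk_left A Y))

theorem not_piercesAt_joinAcross (hM : IsNCMatching (leftOf S A X) M)
    (hN : IsNCMatching (leftOf S X A) N) : ¬ PiercesAt A (joinAcross A X M N) := by
  rintro ⟨B, C, D, hAB, hCD, hdisj, Z, hZ_line, hZ_seg⟩
  obtain rfl := eq_of_mk_mem_joinAcross hM hN hAB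
  obtain hCD | hCD := Finset.mem_insert.mp hCD
  · have hseg : segment ℝ C D = segment ℝ A B := congrArg seg hCD
    rw [hseg] at hdisj
    exact Set.disjoint_left.mp hdisj (left_mem_segment ℝ A B) (left_mem_segment ℝ A B)
  · exact sideOf_ne_zero_of_mem_seg_of_mem_union hM hN hCD hZ_seg
      (sideOf_eq_zero_of_mem_affineSpan hZ_line)

theorem filter_sideOf_pos_joinAcross (hM : IsNCMatching (leftOf S A X) M)
    (hN : IsNCMatching (leftOf S X A) N) :
    (joinAcross A X M N).filter (fun e ↦ ∀ P ∈ e, 0 < sideOf A X P) = M := by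
  ext e
  simp only [joinAcross, Finset.mem_filter, Finset.mem_insert, Finset.mem_union]
  refine ⟨?_, fun he ↦ ⟨.inr (.inl he), fun P ↦ hM.sideOf_pos_of_mem_edge he⟩⟩
  rintro ⟨rfl | he | he, hpos⟩
  · exact absurd (sideOf_apply_left A X) (hpos A (Sym2.mem_mk_left A X)).ne'
  · exact he
  · have hfst := e.out_fst_mem
    exact absurd (hpos _ hfst) (hN.sideOf_neg_of_mem_seg he (mem_seg_of_mem hfst)).not_gt

theorem eq_of_joinAcross_eq_joinAcross {X' : Pt} {M' N' : Finset (Sym2 Pt)}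
    (hM : IsNCMatching (leftOf S A X) M) (hN : IsNCMatching (leftOf S X A) N)
    (hM' : IsNCMatching (leftOf S A X') M') (hN' : IsNCMatching (leftOf S X' A) N')
    (heq : joinAcross A X M N = joinAcross A X' M' N') : X = X' ∧ M = M' ∧ N = N' := by
  obtain rfl : X = X' := eq_of_mk_mem_joinAcross hM' hN' (heq ▸ Finset.mem_insert_self _ _)
  refine ⟨rfl, ?_, ?_⟩
  · rw [← filter_sideOf_pos_joinAcross hM hN, heq, filter_sideOf_pos_joinAcross hM' hN']
  · rw [← filter_sideOf_pos_joinAcross hN hM, joinAcross_swap, heq, ← joinAcross_swap,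
      filter_sideOf_pos_joinAcross hN' hM']

end JoinAcross

/-! ### The Catalan lower bound -/

section Counting

open Finset.HasAntidiagonal (antidiagonal mem_antidiagonal)

variable {S : Finset Pt} {A : Pt}

theorem sum_pm_mul_pm_le_card_nonPiercingMatchings (hS : GeneralPosition S) (hA : A ∈ S) :
    ∑ X ∈ S.erase A, pm (leftOf S A X) * pm (leftOf S X A) ≤ (nonPiercingMatchings S A).card := by
  simp only [pm_eq_card_ncMatchings, ← Finset.card_product]
  rw [← Finset.card_sigma]
  refine Finset.card_le_card_of_injOn (fun t ↦ joinAcross A t.1 t.2.1 t.2.2) ?_ ?_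
  · rintro ⟨X, M, N⟩ ht
    simp only [Finset.coe_sigma, Set.mem_sigma_iff, Finset.mem_coe, Finset.mem_erase,
      Finset.mem_product, mem_ncMatchings] at ht
    obtain ⟨⟨hXA, hX⟩, hM, hN⟩ := ht
    exact Finset.mem_filter.mpr
      ⟨mem_ncMatchings.mpr (isNCMatching_joinAcross hS hA hX hXA.symm hM hN),
        not_piercesAt_joinAcross hM hN⟩
  · rintro ⟨X, M, N⟩ ht ⟨X', M', N'⟩ ht' heq
    simp only [Finset.coe_sigma, Set.mem_sigma_iff, Finset.mem_coe, Finset.mem_product,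
      mem_ncMatchings] at ht ht'
    obtain ⟨rfl, rfl, rfl⟩ := eq_of_joinAcross_eq_joinAcross ht.2.1 ht.2.2 ht'.2.1 ht'.2.2 heq
    rfl

theorem catalan_succ_le_card_nonPiercingMatchings_of_forall_ssubset {k : ℕ} (hS : GeneralPosition S)
    (hcard : S.card = 2 * (k + 1)) (hA : IsSupportPoint (S : Set Pt) A)
    (ih : ∀ T ⊂ S, ∀ j, T.card = 2 * j → catalan j ≤ pm T) :
    catalan (k + 1) ≤ (nonPiercingMatchings S A).card := by
  have hex : ∀ ij ∈ antidiagonal k, ∃ X ∈ S.erase A,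
      (leftOf S A X).card = 2 * ij.1 ∧ (leftOf S X A).card = 2 * ij.2 := fun ij hij ↦
    exists_card_leftOf_eq hS hA (by have := mem_antidiagonal.mp hij; lia)
  choose! X hX hleft hright using hex
  have hinj : Set.InjOn X (antidiagonal k : Finset (ℕ × ℕ)) := by
    intro ij hij ij' hij' heq
    have hl := hleft ij hij
    have hr := hright ij hij
    rw [heq, hleft ij' hij'] at hl
    rw [heq, hright ij' hij'] at hr
    ext <;> lia
  calc catalan (k + 1)
      = ∑ ij ∈ antidiagonal k, catalan ij.1 * catalan ij.2 := catalan_succ' k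
    _ ≤ ∑ ij ∈ antidiagonal k, pm (leftOf S A (X ij)) * pm (leftOf S (X ij) A) :=
        Finset.sum_le_sum fun ij hij ↦ Nat.mul_le_mul
          (ih _ (leftOf_ssubset hA.1) _ (hleft ij hij))
          (ih _ (leftOf_ssubset (Finset.mem_of_mem_erase (hX ij hij))) _ (hright ij hij))
    _ = ∑ Y ∈ (antidiagonal k).image X, pm (leftOf S A Y) * pm (leftOf S Y A) := by
        rw [Finset.sum_image hinj]
    _ ≤ ∑ Y ∈ S.erase A, pm (leftOf S A Y) * pm (leftOf S Y A) :=
        Finset.sum_le_sum_of_subset (Finset.image_subset_iff.mpr hX)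
    _ ≤ (nonPiercingMatchings S A).card :=
        sum_pm_mul_pm_le_card_nonPiercingMatchings hS hA.1

theorem catalan_le_pm (hS : GeneralPosition S) {k : ℕ} (hcard : S.card = 2 * k) :
    catalan k ≤ pm S := by
  induction S using Finset.strongInduction generalizing k with
  | H S ih =>
    rw [pm_eq_card_ncMatchings]
    cases k with
    | zero =>
      obtain rfl : S = ∅ := Finset.card_eq_zero.mp hcard
      rw [catalan_zero, Nat.one_le_iff_ne_zero, Finset.card_ne_zero]
      exact ⟨∅, mem_ncMatchings.mpr isNCMatching_empty⟩
    | succ k =>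
      obtain ⟨A, hA⟩ := exists_isSupportPoint (Finset.card_pos.mp (by lia : 0 < S.card))
      exact (catalan_succ_le_card_nonPiercingMatchings_of_forall_ssubset hS hcard hA
        fun T hT j hj ↦ ih T hT (hS.mono hT.subset) hj).trans
        (Finset.card_le_card (Finset.filter_subset _ _))

theorem catalan_le_card_nonPiercingMatchings {k : ℕ} (hS : GeneralPosition S)
    (hcard : S.card = 2 * k) (hA : IsSupportPoint (S : Set Pt) A) :
    catalan k ≤ (nonPiercingMatchings S A).card := by
  cases k with
  | zero => exact absurd hA.1 (by simp [Finset.card_eq_zero.mp hcard])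
  | succ k =>
    exact catalan_succ_le_card_nonPiercingMatchings_of_forall_ssubset hS hcard hA
      fun T hT j hj ↦ catalan_le_pm (hS.mono hT.subset) hj

end Counting

/-- If a set `S` of `2k` points in general position has a
non-crossing perfect matching with the piercing property, then
`pm S > C_k`. -/
theorem catalan_lt_pm_of_piercing (k : ℕ) (S : Finset Pt)
    (hcard : S.card = 2 * k) (hgp : GeneralPosition S)
    (M : Finset (Sym2 Pt)) (hM : IsNCMatching S M)
    (hpierce : HasPiercing S M) :
    catalan k < pm S := by
  obtain ⟨A, B, C, D, hAB, hCD, hfrontier, hABCD⟩ := hpierce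
  have hA : IsSupportPoint (S : Set Pt) A :=
    isSupportPoint_of_mem_frontier_convexHull (hM.2.1 _ hAB A (Sym2.mem_mk_left A B)) hfrontier
  have hssubset : nonPiercingMatchings S A ⊂ ncMatchings S :=
    Finset.filter_ssubset.mpr
      ⟨M, mem_ncMatchings.mpr hM, not_not.mpr ⟨B, C, D, hAB, hCD, hABCD⟩⟩
  calc catalan k
      ≤ (nonPiercingMatchings S A).card := catalan_le_card_nonPiercingMatchings hgp hcard hA
    _ < (ncMatchings S).card := Finset.card_lt_card hssubset
    _ = pm S := (pm_eq_card_ncMatchings S).symm
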